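/- The polynomial x^24 + 82x^23 - 996x^22 + 968x^21 + 1051x^20 + 1422x^19 - 96x^18 - 24912x^17 + 7896x^16 + 16722x^15 + 28844x^14 + 13658x^13 - 114024x^12 - 13658x^11 + 28844x^10 - 16722x^9 + 7896x^8 + 24912x^7 - 96x^6 - 1422x^5 + 1051x^4 - 968x^3 - 996x^2 - 82x + 1 is irreducible over ℚ. -/

import Mathlib

open Polynomial

/-- The degree 24 polynomial arising as `irr(r(√-13), ℚ)`. -/
noncomputable def rrPoly : ℚ[X] :=
  X ^ 24 + 82 * X ^ 23 - 996 * X ^ 22 + 968 * X ^ 21 + 1051 * X ^ 20 + 1422 * X ^ 19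
    - 96 * X ^ 18 - 24912 * X ^ 17 + 7896 * X ^ 16 + 16722 * X ^ 15 + 28844 * X ^ 14
    + 13658 * X ^ 13 - 114024 * X ^ 12 - 13658 * X ^ 11 + 28844 * X ^ 10 - 16722 * X ^ 9
    + 7896 * X ^ 8 + 24912 * X ^ 7 - 96 * X ^ 6 - 1422 * X ^ 5 + 1051 * X ^ 4
    - 968 * X ^ 3 - 996 * X ^ 2 - 82 * X + 1

namespace RRIrr

/-- A monic cubic. -/
noncomputable def cub {R : Type} [CommRing R] (a b c : R) : R[X] :=
  X ^ 3 + C a * X ^ 2 + C b * X + C c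

/-- A monic quartic. -/
noncomputable def quart {R : Type} [CommRing R] (a b c d : R) : R[X] :=
  X ^ 4 + C a * X ^ 3 + C b * X ^ 2 + C c * X + C d

theorem cub_natDegree {R : Type} [CommRing R] [Nontrivial R] (a b c : R) :
    (cub a b c).natDegree = 3 := by
  unfold cub; compute_degree!

theorem cub_monic {R : Type} [CommRing R] (a b c : R) : (cub a b c).Monic := by
  unfold cub; monicity!

theorem quart_natDegree {R : Type} [CommRing R] [Nontrivial R] (a b c d : R) :
    (quart a b c d).natDegree = 4 := by
  unfold quart; compute_degree!

theorem quart_monic {R : Type} [CommRing R] (a b c d : R) : (quart a b c d).Monic := by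
  unfold quart; monicity!

theorem quart_inj {R : Type} [CommRing R] (a b c d an bn cn dn : R)
    (h : quart a b c d = quart an bn cn dn) : a = an ∧ b = bn ∧ c = cn ∧ d = dn := by
  have e3 := congrArg (fun q => coeff q 3) h
  have e2 := congrArg (fun q => coeff q 2) h
  have e1 := congrArg (fun q => coeff q 1) h
  have e0 := congrArg (fun q => coeff q 0) h
  simp [quart, coeff_X, coeff_C] at e3 e2 e1 e0
  exact ⟨e3, e2, e1, e0⟩

theorem cub_irreducible {K : Type} [Field K] (a b c : K)
    (h : ∀ x : K, x ^ 3 + a * x ^ 2 + b * x + c ≠ 0) : Irreducible (cub a b c) := by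
  rw [(cub_monic a b c).irreducible_iff_roots_eq_zero_of_degree_le_three
    (by rw [cub_natDegree]; norm_num) (by rw [cub_natDegree])]
  refine Multiset.eq_zero_of_forall_notMem fun x hx => h x ?_
  have := (mem_roots'.1 hx).2
  simpa [cub, IsRoot] using this

theorem quart_irreducible {K : Type} [Field K] (a b c d : K)
    (h1 : ∀ x : K, x ^ 4 + a * x ^ 3 + b * x ^ 2 + c * x + d ≠ 0)
    (h2 : ∀ u v : K, u * (b - v - u * (a - u)) + v * (a - u) = c →
      v * (b - v - u * (a - u)) ≠ d) : Irreducible (quart a b c d) := by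
  rw [(quart_monic a b c d).irreducible_iff_natDegree']
  refine ⟨fun h => ?_, fun f g hf hg hfg hmem => ?_⟩
  · have := quart_natDegree a b c d
    rw [h] at this; simp at this
  · have hdeg : f.natDegree + g.natDegree = 4 := by
      rw [← hf.natDegree_mul hg, hfg, quart_natDegree]
    rw [quart_natDegree, Finset.mem_Ioc] at hmem
    obtain ⟨hm1, hm2⟩ := hmem
    have hcases : g.natDegree = 1 ∨ g.natDegree = 2 := by omega
    rcases hcases with hg1 | hg2
    · have hgl : g = X + C (g.coeff 0) := by
        have hc : g.coeff 1 = 1 := by rw [← hg1]; exact hg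
        conv_lhs => rw [g.as_sum_range_C_mul_X_pow, hg1]
        simp [Finset.sum_range_succ, hc, add_comm]
      refine h1 (-g.coeff 0) ?_
      have he := congrArg (eval (-g.coeff 0)) hfg
      have hg0 : eval (-g.coeff 0) g = 0 := by
        generalize g.coeff 0 = e at hgl
        rw [hgl]; simp
      rw [eval_mul, hg0, mul_zero] at he
      simpa [quart] using he.symm
    · have hf2 : f.natDegree = 2 := by omega
      have hgl : g = X ^ 2 + C (g.coeff 1) * X + C (g.coeff 0) := by
        have hc : g.coeff 2 = 1 := by rw [← hg2]; exact hg
        conv_lhs => rw [g.as_sum_range_C_mul_X_pow, hg2]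
        simp [Finset.sum_range_succ, hc]; ring
      have hfl : f = X ^ 2 + C (f.coeff 1) * X + C (f.coeff 0) := by
        have hc : f.coeff 2 = 1 := by rw [← hf2]; exact hf
        conv_lhs => rw [f.as_sum_range_C_mul_X_pow, hf2]
        simp [Finset.sum_range_succ, hc]; ring
      generalize g.coeff 1 = u at hgl
      generalize g.coeff 0 = v at hgl
      generalize f.coeff 1 = s at hfl
      generalize f.coeff 0 = t at hfl
      have key : quart (s + u) (t + v + s * u) (s * v + t * u) (t * v) = quart a b c d := by
        rw [← hfg, hgl, hfl]
        simp only [quart, C_add, C_mul]; ring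
      obtain ⟨e3, e2, e1, e0⟩ := quart_inj _ _ _ _ _ _ _ _ key
      have hs : s = a - u := by linear_combination e3
      have ht : t = b - v - u * (a - u) := by subst hs; linear_combination e2
      subst hs
      subst ht
      exact h2 u v (by linear_combination e1) (by linear_combination e0)

/-- A factor of a product of primes of degree divisible by `n` has degree divisible by `n`. -/
theorem dvd_natDegree_of_prod {K : Type} [Field K] (n : ℕ) (l : List K[X]) :
    ∀ A B : K[X], (∀ q ∈ l, Irreducible q ∧ n ∣ q.natDegree) → A * B = l.prod →
      n ∣ A.natDegree := by
  induction l with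
  | nil =>
    intro A B _ h
    have hu : IsUnit A := IsUnit.of_mul_eq_one B (by simpa using h)
    rw [natDegree_eq_zero_of_isUnit hu]; exact dvd_zero n
  | cons q l ih =>
    intro A B hl h
    obtain ⟨hq, hdn⟩ := hl q (by simp)
    have hln : ∀ r ∈ l, Irreducible r ∧ n ∣ r.natDegree := fun r hr => hl r (by simp [hr])
    rw [List.prod_cons] at h
    have hdvd : q ∣ A * B := ⟨_, h⟩
    rcases hq.prime.dvd_or_dvd hdvd with ⟨An, rfl⟩ | ⟨Bn, rfl⟩
    · have hn : An * B = l.prod := mul_left_cancel₀ hq.ne_zero (by rw [← h]; ring)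
      have := ih An B hln hn
      by_cases hA : An = 0
      · simp [hA]
      · rw [natDegree_mul hq.ne_zero hA]; exact dvd_add hdn this
    · have hn : A * Bn = l.prod := mul_left_cancel₀ hq.ne_zero (by rw [← h]; ring)
      exact ih A Bn hln hn

/-- The analogue for a product of squares of primes, when no prime divides both factors. -/
theorem dvd_natDegree_of_prod_sq {K : Type} [Field K] (n : ℕ) (l : List K[X]) :
    ∀ A B : K[X], (∀ q ∈ l, Irreducible q ∧ n ∣ 2 * q.natDegree ∧ ¬ (q ∣ A ∧ q ∣ B)) →
      A * B = (l.map (fun q => q ^ 2)).prod → n ∣ A.natDegree := by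
  induction l with
  | nil =>
    intro A B _ h
    have hu : IsUnit A := IsUnit.of_mul_eq_one B (by simpa using h)
    rw [natDegree_eq_zero_of_isUnit hu]; exact dvd_zero n
  | cons q l ih =>
    intro A B hl h
    obtain ⟨hq, hdn, hAB⟩ := hl q (by simp)
    have hln : ∀ r ∈ l, Irreducible r ∧ n ∣ 2 * r.natDegree ∧ ¬ (r ∣ A ∧ r ∣ B) :=
      fun r hr => hl r (by simp [hr])
    rw [List.map_cons, List.prod_cons] at h
    have hdvd : q ^ 2 ∣ A * B := ⟨_, h⟩
    have hq2 : q ^ 2 ≠ 0 := pow_ne_zero 2 hq.ne_zero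
    by_cases hqB : q ∣ B
    · have hqA : ¬ q ∣ A := fun hA => hAB ⟨hA, hqB⟩
      obtain ⟨Bn, rfl⟩ := hq.prime.pow_dvd_of_dvd_mul_left 2 hqA hdvd
      have hn : A * Bn = (l.map (fun q => q ^ 2)).prod :=
        mul_left_cancel₀ hq2 (by rw [← h]; ring)
      exact ih A Bn (fun r hr => ⟨(hln r hr).1, (hln r hr).2.1, fun hh =>
        (hln r hr).2.2 ⟨hh.1, hh.2.mul_left _⟩⟩) hn
    · obtain ⟨An, rfl⟩ := hq.prime.pow_dvd_of_dvd_mul_right 2 hqB hdvd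
      have hn : An * B = (l.map (fun q => q ^ 2)).prod :=
        mul_left_cancel₀ hq2 (by rw [← h]; ring)
      have := ih An B (fun r hr => ⟨(hln r hr).1, (hln r hr).2.1, fun hh =>
        (hln r hr).2.2 ⟨hh.1.mul_left _, hh.2⟩⟩) hn
      by_cases hA : An = 0
      · simp [hA]
      · rw [natDegree_mul hq2 hA, natDegree_pow]; exact dvd_add hdn this

/-- An integer polynomial vanishing mod `p` is `p` times an integer polynomial. -/
theorem exists_of_map_eq_zero (p : ℕ) (A : ℤ[X]) (h : A.map (Int.castRingHom (ZMod p)) = 0) :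
    ∃ s : ℤ[X], A = C (p : ℤ) * s := by
  have : C (p : ℤ) ∣ A := by
    rw [C_dvd_iff_dvd_coeff]
    intro i
    have hi := congrArg (fun q => coeff q i) h
    simp only [coeff_map, coeff_zero, eq_intCast] at hi
    exact (ZMod.intCast_zmod_eq_zero_iff_dvd _ p).1 hi
  exact this

theorem exists_of_map_dvd (p : ℕ) (q A : ℤ[X])
    (h : q.map (Int.castRingHom (ZMod p)) ∣ A.map (Int.castRingHom (ZMod p))) :
    ∃ u s : ℤ[X], A = q * u + C (p : ℤ) * s := by
  obtain ⟨w, hw⟩ := h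
  obtain ⟨u, rfl⟩ := map_surjective (Int.castRingHom (ZMod p))
    (ZMod.ringHom_surjective _) w
  obtain ⟨s, hs⟩ := exists_of_map_eq_zero p (A - q * u) (by
    rw [Polynomial.map_sub, Polynomial.map_mul, hw, sub_self])
  exact ⟨u, s, by rw [← hs]; ring⟩

/-- If `f = q Q + p r` with `q` monic and `r` not divisible by `q` mod `p`, then `q` cannot divide
both factors of `f` mod `p`. -/
theorem not_dvd_both (p : ℕ) [Fact p.Prime] (q Q r A B : ℤ[X]) (hq : q.Monic)
    (hr : ¬ q.map (Int.castRingHom (ZMod p)) ∣ r.map (Int.castRingHom (ZMod p)))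
    (h : A * B = q * Q + C (p : ℤ) * r) :
    ¬ (q.map (Int.castRingHom (ZMod p)) ∣ A.map (Int.castRingHom (ZMod p)) ∧
      q.map (Int.castRingHom (ZMod p)) ∣ B.map (Int.castRingHom (ZMod p))) := by
  rintro ⟨hA, hB⟩
  obtain ⟨u, s, rfl⟩ := exists_of_map_dvd p q A hA
  obtain ⟨v, t, rfl⟩ := exists_of_map_dvd p q B hB
  set P : ℤ[X] := C (p : ℤ) with hP
  have hp0 : P ≠ 0 := by
    rw [hP, Ne, C_eq_zero]; exact_mod_cast (Fact.out : p.Prime).ne_zero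
  have hPmap : P.map (Int.castRingHom (ZMod p)) = 0 := by simp [hP]
  set w : ℤ[X] := q * u * v + P * (u * t + s * v) - Q with hw
  have h1 : q * w = P * (r - P * (s * t)) := by
    rw [hw]; linear_combination h
  have h2 := congrArg (Polynomial.map (Int.castRingHom (ZMod p))) h1
  rw [Polynomial.map_mul, Polynomial.map_mul, hPmap, zero_mul] at h2
  have h3 : w.map (Int.castRingHom (ZMod p)) = 0 := by
    rcases mul_eq_zero.1 h2 with h4 | h4
    · exact absurd h4 (hq.map _).ne_zero
    · exact h4
  obtain ⟨z, hz⟩ := exists_of_map_eq_zero p w h3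
  have h5 : q * z = r - P * (s * t) := by
    apply mul_left_cancel₀ hp0
    rw [← h1, hz]; ring
  apply hr
  refine ⟨z.map (Int.castRingHom (ZMod p)), ?_⟩
  rw [← Polynomial.map_mul, h5, Polynomial.map_sub, Polynomial.map_mul, hPmap, zero_mul, sub_zero]

/-- The integral model of the polynomial. -/
noncomputable def F : ℤ[X] :=
  X ^ 24 + 82 * X ^ 23 - 996 * X ^ 22 + 968 * X ^ 21 + 1051 * X ^ 20 + 1422 * X ^ 19 - 96 * X
    ^ 18 - 24912 * X ^ 17 + 7896 * X ^ 16 + 16722 * X ^ 15 + 28844 * X ^ 14 + 13658 * X ^ 13 -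
    114024 * X ^ 12 - 13658 * X ^ 11 + 28844 * X ^ 10 - 16722 * X ^ 9 + 7896 * X ^ 8 + 24912 * X
    ^ 7 - 96 * X ^ 6 - 1422 * X ^ 5 + 1051 * X ^ 4 - 968 * X ^ 3 - 996 * X ^ 2 - 82 * X + 1

theorem F_monic : F.Monic := by
  unfold F; monicity!

theorem F_natDegree : F.natDegree = 24 := by
  unfold F; compute_degree!

theorem F_map : F.map (algebraMap ℤ ℚ) = rrPoly := by
  simp [F, rrPoly]

instance fact13 : Fact (Nat.Prime 13) := ⟨by norm_num⟩
instance fact61 : Fact (Nat.Prime 61) := ⟨by norm_num⟩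

/-- The factors modulo `61`. -/
noncomputable def l61 : List (ZMod 61)[X] :=
  [cub 11 (-23) 7, cub (-1) 22 23, cub 12 19 26, cub 6 (-23) (-19), cub 2 (-26) (-16), cub 17
    (-30) (-12), cub 7 (-8) (-8), cub 28 24 (-5)]

theorem F_map61 : F.map (Int.castRingHom (ZMod 61)) = l61.prod := by
  have h : (61 : (ZMod 61)[X]) = 0 := by
    have := CharP.cast_eq_zero (ZMod 61)[X] 61
    exact_mod_cast this
  simp only [F, l61, cub, List.prod_cons, List.prod_nil, Polynomial.map_add, Polynomial.map_sub,
    Polynomial.map_mul, Polynomial.map_pow, map_X, Polynomial.map_ofNat, Polynomial.map_one,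
    map_neg, map_ofNat, map_one]
  linear_combination
    (-59 * X ^ 22 - 639 * X ^ 21 - 4680 * X ^ 20 - 7921 * X ^ 19 + 73465 * X ^ 18 + 370962 * X ^
      17 + 1711964 * X ^ 16 + 9891294 * X ^ 15 - 14550845 * X ^ 14 - 216061471 * X ^ 13 -
      104149133 * X ^ 12 + 835008257 * X ^ 11 + 1525885825 * X ^ 10 - 445452316 * X ^ 9 -
      4215534275 * X ^ 8 - 3067567814 * X ^ 7 + 2885885186 * X ^ 6 + 4523411346 * X ^ 5 +
      1283947943 * X ^ 4 - 562219160 * X ^ 3 - 297013556 * X ^ 2 - 629818 * X + 10013461) * h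

theorem l61_irr : ∀ q ∈ l61, Irreducible q ∧ 3 ∣ q.natDegree := by
  have key : ∀ a b c : ZMod 61, (∀ x : ZMod 61, x ^ 3 + a * x ^ 2 + b * x + c ≠ 0) →
      Irreducible (cub a b c) ∧ 3 ∣ (cub a b c).natDegree := fun a b c h =>
    ⟨cub_irreducible a b c h, by rw [cub_natDegree]⟩
  simp only [l61, List.forall_mem_cons]
  refine ⟨?_, ?_, ?_, ?_, ?_, ?_, ?_, ?_, by simp⟩ <;> exact key _ _ _ (by decide +kernel)

/-- The factors modulo `13`. -/
noncomputable def l13 : List (ZMod 13)[X] :=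
  [quart (-1) 1 1 1, quart 1 3 (-1) 1, quart 2 4 (-2) 1]

theorem F_map13 : F.map (Int.castRingHom (ZMod 13)) = (l13.map (fun q => q ^ 2)).prod := by
  have h : (13 : (ZMod 13)[X]) = 0 := by
    have := CharP.cast_eq_zero (ZMod 13)[X] 13
    exact_mod_cast this
  simp only [F, l13, quart, List.map_cons, List.map_nil, List.prod_cons, List.prod_nil,
    Polynomial.map_add, Polynomial.map_sub,
    Polynomial.map_mul, Polynomial.map_pow, map_X, Polynomial.map_ofNat, Polynomial.map_one,
    map_neg, map_ofNat, map_one]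
  linear_combination
    (6 * X ^ 23 - 78 * X ^ 22 + 72 * X ^ 21 + 74 * X ^ 20 + 102 * X ^ 19 - 32 * X ^ 18 - 1936 * X
      ^ 17 + 540 * X ^ 16 + 1266 * X ^ 15 + 2098 * X ^ 14 + 1038 * X ^ 13 - 8952 * X ^ 12 - 1038 *
      X ^ 11 + 2098 * X ^ 10 - 1266 * X ^ 9 + 540 * X ^ 8 + 1936 * X ^ 7 - 32 * X ^ 6 - 102 * X ^
      5 + 74 * X ^ 4 - 72 * X ^ 3 - 78 * X ^ 2 - 6 * X) * h

theorem quart_map (a b c d : ℤ) : (quart a b c d).map (Int.castRingHom (ZMod 13)) =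
    quart (a : ZMod 13) (b : ZMod 13) (c : ZMod 13) (d : ZMod 13) := by
  simp [quart]

theorem not_dvd_small (a b c d : ZMod 13) (r : (ZMod 13)[X]) (h1 : r.natDegree ≤ 3)
    (h0 : r.coeff 0 ≠ 0) : ¬ quart a b c d ∣ r := by
  apply (quart_monic a b c d).not_dvd_of_natDegree_lt
  · rintro rfl; simp at h0
  · rw [quart_natDegree]; omega

theorem not_both1 (A B : ℤ[X]) (h : A * B = F) :
    ¬ ((quart (-1) 1 1 1 : (ZMod 13)[X]) ∣ A.map (Int.castRingHom (ZMod 13)) ∧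
      (quart (-1) 1 1 1 : (ZMod 13)[X]) ∣ B.map (Int.castRingHom (ZMod 13))) := by
  have hq := quart_map (-1) 1 1 1
  push_cast at hq
  rw [← hq]
  refine not_dvd_both 13 (quart (-1) 1 1 1)
    (X ^ 20 + 83 * X ^ 19 - 914 * X ^ 18 - 30 * X ^ 17 + 1851 * X ^ 16 + 4134 * X ^ 15 + 3131 * X
      ^ 14 - 27736 * X ^ 13 - 28956 * X ^ 12 + 8237 * X ^ 11 + 90642 * X ^ 10 + 152755 * X ^ 9 -
      31192 * X ^ 8 - 296484 * X ^ 7 - 479845 * X ^ 6 - 321646 * X ^ 5 + 493771 * X ^ 4 + 1616658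
      * X ^ 3 + 1924282 * X ^ 2 + 134077 * X - 3899583)
    (-582736 * X ^ 3 + 141556 * X ^ 2 + 289648 * X + 299968) A B (quart_monic _ _ _ _) ?_ ?_
  · rw [hq]
    apply not_dvd_small
    · refine natDegree_map_le.trans ?_
      compute_degree
    · rw [coeff_map]
      simp [coeff_X]
      decide +kernel
  · rw [h]
    simp only [F, quart, map_neg, map_ofNat, map_one, Nat.cast_ofNat]
    ring

theorem not_both2 (A B : ℤ[X]) (h : A * B = F) :
    ¬ ((quart 1 3 (-1) 1 : (ZMod 13)[X]) ∣ A.map (Int.castRingHom (ZMod 13)) ∧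
      (quart 1 3 (-1) 1 : (ZMod 13)[X]) ∣ B.map (Int.castRingHom (ZMod 13))) := by
  have hq := quart_map 1 3 (-1) 1
  push_cast at hq
  rw [← hq]
  refine not_dvd_both 13 (quart 1 3 (-1) 1)
    (X ^ 20 + 81 * X ^ 19 - 1080 * X ^ 18 + 1806 * X ^ 17 + 2565 * X ^ 16 - 7722 * X ^ 15 + 2817
      * X ^ 14 - 3804 * X ^ 13 - 7038 * X ^ 12 + 45711 * X ^ 11 - 2374 * X ^ 10 - 124335 * X ^ 9 +
      70182 * X ^ 8 + 241080 * X ^ 7 - 544743 * X ^ 6 - 702 * X ^ 5 + 1813725 * X ^ 4 - 2572530 *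
      X ^ 3 - 2324700 * X ^ 2 + 11855295 * X - 9266399)
    (-2004048 * X ^ 3 + 3229092 * X ^ 2 - 1624752 * X + 712800) A B (quart_monic _ _ _ _) ?_ ?_
  · rw [hq]
    apply not_dvd_small
    · refine natDegree_map_le.trans ?_
      compute_degree
    · rw [coeff_map]
      simp [coeff_X]
      decide +kernel
  · rw [h]
    simp only [F, quart, map_neg, map_ofNat, map_one, Nat.cast_ofNat]
    ring

theorem not_both3 (A B : ℤ[X]) (h : A * B = F) :
    ¬ ((quart 2 4 (-2) 1 : (ZMod 13)[X]) ∣ A.map (Int.castRingHom (ZMod 13)) ∧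
      (quart 2 4 (-2) 1 : (ZMod 13)[X]) ∣ B.map (Int.castRingHom (ZMod 13))) := by
  have hq := quart_map 2 4 (-2) 1
  push_cast at hq
  rw [← hq]
  refine not_dvd_both 13 (quart 2 4 (-2) 1)
    (X ^ 20 + 80 * X ^ 19 - 1160 * X ^ 18 + 2970 * X ^ 17 - 90 * X ^ 16 - 12678 * X ^ 15 + 32720
      * X ^ 14 - 42790 * X ^ 13 - 62670 * X ^ 12 + 391340 * X ^ 11 - 621456 * X ^ 10 - 391340 * X
      ^ 9 + 3999830 * X ^ 8 - 8082210 * X ^ 7 + 32720 * X ^ 6 + 40637678 * X ^ 5 - 101562590 * X ^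
      4 + 48747030 * X ^ 3 + 389998840 * X ^ 2 - 1218750080 * X + 1076562501)
    (265625000 * X ^ 3 - 548750000 * X ^ 2 + 259375000 * X - 82812500) A B (quart_monic _ _ _ _) ?_ ?_
  · rw [hq]
    apply not_dvd_small
    · refine natDegree_map_le.trans ?_
      compute_degree
    · rw [coeff_map]
      simp [coeff_X]
      decide +kernel
  · rw [h]
    simp only [F, quart, map_neg, map_ofNat, map_one, Nat.cast_ofNat]
    ring

theorem l13_irr (A B : ℤ[X]) (h : A * B = F) : ∀ q ∈ l13, Irreducible q ∧
    8 ∣ 2 * q.natDegree ∧ ¬ (q ∣ A.map (Int.castRingHom (ZMod 13)) ∧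
      q ∣ B.map (Int.castRingHom (ZMod 13))) := by
  simp only [l13, List.forall_mem_cons]
  refine ⟨⟨?_, ?_, not_both1 A B h⟩, ⟨?_, ?_, not_both2 A B h⟩, ⟨?_, ?_, not_both3 A B h⟩,
    by simp⟩
  · exact quart_irreducible _ _ _ _ (by decide +kernel) (by decide +kernel)
  · rw [quart_natDegree]
  · exact quart_irreducible _ _ _ _ (by decide +kernel) (by decide +kernel)
  · rw [quart_natDegree]
  · exact quart_irreducible _ _ _ _ (by decide +kernel) (by decide +kernel)
  · rw [quart_natDegree]

theorem F_irreducible : Irreducible F := by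
  rw [F_monic.irreducible_iff_natDegree]
  refine ⟨fun h => ?_, fun A B hA hB hAB => ?_⟩
  · have := F_natDegree
    rw [h] at this; simp at this
  · have h3 : 3 ∣ A.natDegree := by
      have := dvd_natDegree_of_prod 3 l61 (A.map (Int.castRingHom (ZMod 61)))
        (B.map (Int.castRingHom (ZMod 61))) l61_irr
        (by rw [← Polynomial.map_mul, hAB, F_map61])
      rwa [hA.natDegree_map] at this
    have h8 : 8 ∣ A.natDegree := by
      have := dvd_natDegree_of_prod_sq 8 l13 (A.map (Int.castRingHom (ZMod 13)))
        (B.map (Int.castRingHom (ZMod 13))) (l13_irr A B hAB)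
        (by rw [← Polynomial.map_mul, hAB, F_map13])
      rwa [hA.natDegree_map] at this
    have hdeg : A.natDegree + B.natDegree = 24 := by
      rw [← hA.natDegree_mul hB, hAB, F_natDegree]
    omega

end RRIrr

/-- The polynomial `rrPoly` is irreducible over `ℚ`. -/
theorem rrPoly_irreducible : Irreducible rrPoly := by
  rw [← RRIrr.F_map]
  exact (RRIrr.F_monic.irreducible_iff_irreducible_map_fraction_map (K := ℚ)).1
    RRIrr.F_irreducible
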